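/- arXiv:2411.05716 — 5 statements merged into one kernel-verified Lean document; each statement's English description precedes it below -/
import Mathlib

section
/- Let a, b ∈ ℂ with a ≠ 0, and let L¹₂(a,b) be the left-symmetric dialgebra on ℂ² with basis e₁, e₂ and products e₁ ⊣ e₂ = e₁, e₂ ⊣ e₂ = e₂, e₂ ⊢ e₁ = a·e₁, e₂ ⊢ e₂ = b·e₁ + e₂ (all other basis products zero). Then a linear map d : ℂ² → ℂ² is a (1,1,0)-derivation of L¹₂(a,b) if and only if d is a scalar multiple of the identity; in particular Der_{(1,1,0)}L¹₂(a,b) has dimension 1. -/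
noncomputable section

/-- `d` is a `(ρ,τ,σ)`-derivation of the algebra `(S, la, ra)`, where `la` is the
left product `⊣` and `ra` is the right product `⊢`. -/
def IsDer {K : Type*} [CommRing K] {S : Type*} [AddCommGroup S] [Module K S]
    (la ra : S →ₗ[K] S →ₗ[K] S) (ρ τ σ : K) (d : S →ₗ[K] S) : Prop :=
  (∀ p q : S, ρ • d (la p q) = τ • la (d p) q + σ • la p (d q)) ∧
  (∀ p q : S, ρ • d (ra p q) = τ • ra (d p) q + σ • ra p (d q))

/-- The space `Der_{(ρ,τ,σ)} S` of `(ρ,τ,σ)`-derivations, as a submodule of `End S`. -/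
def DerSub {K : Type*} [CommRing K] {S : Type*} [AddCommGroup S] [Module K S]
    (la ra : S →ₗ[K] S →ₗ[K] S) (ρ τ σ : K) : Submodule K (S →ₗ[K] S) where
  carrier := {d | IsDer la ra ρ τ σ d}
  zero_mem' := ⟨fun p q => by simp, fun p q => by simp⟩
  add_mem' := by
    rintro d₁ d₂ h₁ h₂
    refine ⟨fun p q => ?_, fun p q => ?_⟩
    · have a1 := h₁.1 p q; have a2 := h₂.1 p q
      simp only [LinearMap.add_apply, map_add, smul_add]
      rw [a1, a2]; abel
    · have a1 := h₁.2 p q; have a2 := h₂.2 p q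
      simp only [LinearMap.add_apply, map_add, smul_add]
      rw [a1, a2]; abel
  smul_mem' := by
    rintro c d h
    refine ⟨fun p q => ?_, fun p q => ?_⟩
    · simp only [LinearMap.smul_apply, map_smul]
      rw [smul_comm ρ c, h.1 p q, smul_add, smul_comm τ c, smul_comm σ c]
    · simp only [LinearMap.smul_apply, map_smul]
      rw [smul_comm ρ c, h.2 p q, smul_add, smul_comm τ c, smul_comm σ c]

/-- The left product `⊣` of the dialgebra, extended bilinearly from its values on the
basis `e₁ = (1,0)`, `e₂ = (0,1)` of `ℂ²`. -/
def L1l (a b : ℂ) : (ℂ × ℂ) →ₗ[ℂ] (ℂ × ℂ) →ₗ[ℂ] (ℂ × ℂ) :=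
  LinearMap.mk₂ ℂ (fun p q => (p.1 * q.2, p.2 * q.2))
    (by intros; ext <;> simp <;> ring)
    (by intros; ext <;> simp <;> ring)
    (by intros; ext <;> simp <;> ring)
    (by intros; ext <;> simp <;> ring)

/-- The right product `⊢` of the dialgebra, extended bilinearly from its values on the
basis `e₁ = (1,0)`, `e₂ = (0,1)` of `ℂ²`. -/
def L1r (a b : ℂ) : (ℂ × ℂ) →ₗ[ℂ] (ℂ × ℂ) →ₗ[ℂ] (ℂ × ℂ) :=
  LinearMap.mk₂ ℂ (fun p q => (a * p.2 * q.1 + b * p.2 * q.2, p.2 * q.2))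
    (by intros; ext <;> simp <;> ring)
    (by intros; ext <;> simp <;> ring)
    (by intros; ext <;> simp <;> ring)
    (by intros; ext <;> simp <;> ring)

/-!
A `(1,1,0)`-derivation is a linear map commuting with all right multiplications. In `L¹₂(a,b)` one
has `p ⊢ q = p₂ • (e₂ ⊢ q)`, and `e₂ ⊢ ·` has determinant `a ≠ 0`. So every vector is some
`v = e₂ ⊢ q`, and `d v = d e₂ ⊢ q = (d e₂)₂ • v`.
-/

section General

variable {K S : Type*} [CommRing K] [AddCommGroup S] [Module K S]
  {la ra : S →ₗ[K] S →ₗ[K] S} {d : S →ₗ[K] S}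

theorem mem_derSub {ρ τ σ : K} : d ∈ DerSub la ra ρ τ σ ↔ IsDer la ra ρ τ σ d :=
  Iff.rfl

theorem isDer_one_one_zero_iff :
    IsDer la ra 1 1 0 d ↔
      (∀ p q, d (la p q) = la (d p) q) ∧ ∀ p q, d (ra p q) = ra (d p) q := by
  simp only [IsDer, one_smul, zero_smul, add_zero]

theorem isDer_one_one_zero_smul_id (c : K) : IsDer la ra 1 1 0 (c • LinearMap.id) := by
  simp [isDer_one_one_zero_iff]

variable {e : S} {φ : S → K}

theorem IsDer.eq_smul_id_of_surjective (hd : IsDer la ra 1 1 0 d)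
    (hφ : ∀ p q, ra p q = φ p • ra e q) (he : Function.Surjective (ra e)) :
    d = φ (d e) • LinearMap.id := by
  ext v
  obtain ⟨q, rfl⟩ := he v
  calc d (ra e q) = ra (d e) q := (isDer_one_one_zero_iff.mp hd).2 e q
    _ = φ (d e) • ra e q := hφ (d e) q

theorem isDer_one_one_zero_iff_exists_eq_smul_id
    (hφ : ∀ p q, ra p q = φ p • ra e q) (he : Function.Surjective (ra e)) :
    IsDer la ra 1 1 0 d ↔ ∃ c : K, d = c • LinearMap.id := by
  constructor
  · exact fun hd => ⟨φ (d e), hd.eq_smul_id_of_surjective hφ he⟩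
  · rintro ⟨c, rfl⟩
    exact isDer_one_one_zero_smul_id c

theorem derSub_one_one_zero_eq_span_id
    (hφ : ∀ p q, ra p q = φ p • ra e q) (he : Function.Surjective (ra e)) :
    DerSub la ra 1 1 0 = Submodule.span K {LinearMap.id} := by
  ext d
  simp only [mem_derSub, isDer_one_one_zero_iff_exists_eq_smul_id hφ he,
    Submodule.mem_span_singleton, eq_comm]

end General

theorem L1r_apply (a b : ℂ) (p q : ℂ × ℂ) :
    L1r a b p q = (a * p.2 * q.1 + b * p.2 * q.2, p.2 * q.2) :=
  rfl

theorem L1r_eq_snd_smul (a b : ℂ) (p q : ℂ × ℂ) :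
    L1r a b p q = p.2 • L1r a b (0, 1) q := by
  ext <;> simp only [L1r_apply, Prod.smul_mk, smul_eq_mul] <;> ring

theorem L1r_zero_one_surjective {a : ℂ} (b : ℂ) (ha : a ≠ 0) :
    Function.Surjective (L1r a b (0, 1)) := by
  rintro ⟨x, y⟩
  refine ⟨((x - b * y) / a, y), ?_⟩
  ext <;> simp only [L1r_apply] <;> field_simp
  ring

theorem L1_der_one_one_zero (a b : ℂ) (ha : a ≠ 0) :
    (∀ d : (ℂ × ℂ) →ₗ[ℂ] (ℂ × ℂ), IsDer (L1l a b) (L1r a b) 1 1 0 d ↔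
      ∃ c : ℂ, d = c • (LinearMap.id : (ℂ × ℂ) →ₗ[ℂ] (ℂ × ℂ))) ∧
    Module.finrank ℂ (DerSub (L1l a b) (L1r a b) 1 1 0) = 1 := by
  have snd_smul := L1r_eq_snd_smul a b
  have surjective := L1r_zero_one_surjective b ha
  refine ⟨fun d => isDer_one_one_zero_iff_exists_eq_smul_id snd_smul surjective, ?_⟩
  rw [derSub_one_one_zero_eq_span_id snd_smul surjective]
  exact finrank_span_singleton (one_ne_zero (α := Module.End ℂ (ℂ × ℂ)))
end
end

section
/- Let b ∈ ℂ and let L³₂(b) be the left-symmetric dialgebra on ℂ² with basis e₁, e₂ and products e₁ ⊣ e₂ = e₁, e₂ ⊣ e₂ = e₂, e₂ ⊢ e₂ = b·e₁ + e₂ (all other basis products zero). Then a linear map d : ℂ² → ℂ² is a (0,0,1)-derivation of L³₂(b) if and only if its matrix in the basis (e₁,e₂) has the form [[d₁₁, d₁₂],[0, 0]] for some d₁₁, d₁₂ ∈ ℂ; in particular Der_{(0,0,1)}L³₂(b) has dimension 2. -/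
noncomputable section

/-- The left product `⊣` of the dialgebra, extended bilinearly from its values on the
basis `e₁ = (1,0)`, `e₂ = (0,1)` of `ℂ²`. -/
def L3l (b : ℂ) : (ℂ × ℂ) →ₗ[ℂ] (ℂ × ℂ) →ₗ[ℂ] (ℂ × ℂ) :=
  LinearMap.mk₂ ℂ (fun p q => (p.1 * q.2, p.2 * q.2))
    (by intros; ext <;> simp <;> ring)
    (by intros; ext <;> simp <;> ring)
    (by intros; ext <;> simp <;> ring)
    (by intros; ext <;> simp <;> ring)

/-- The right product `⊢` of the dialgebra, extended bilinearly from its values on the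
basis `e₁ = (1,0)`, `e₂ = (0,1)` of `ℂ²`. -/
def L3r (b : ℂ) : (ℂ × ℂ) →ₗ[ℂ] (ℂ × ℂ) →ₗ[ℂ] (ℂ × ℂ) :=
  LinearMap.mk₂ ℂ (fun p q => (b * p.2 * q.2, p.2 * q.2))
    (by intros; ext <;> simp <;> ring)
    (by intros; ext <;> simp <;> ring)
    (by intros; ext <;> simp <;> ring)
    (by intros; ext <;> simp <;> ring)

section RightAnnihilator

variable {K S : Type*} [CommRing K] [AddCommGroup S] [Module K S]
  (la ra : S →ₗ[K] S →ₗ[K] S)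

/-- The right annihilator `{s | S ⊣ s = 0 = S ⊢ s}` of the algebra `(S, la, ra)`, the subspace in
which the `(0,0,1)`-derivations take their values. -/
def rightAnnihilator : Submodule K S :=
  LinearMap.ker la.flip ⊓ LinearMap.ker ra.flip

theorem mem_rightAnnihilator_iff {s : S} :
    s ∈ rightAnnihilator la ra ↔ (∀ p, la p s = 0) ∧ ∀ p, ra p s = 0 := by
  simp [rightAnnihilator, LinearMap.ext_iff]

theorem isDer_zero_zero_one_iff {d : S →ₗ[K] S} :
    IsDer la ra 0 0 1 d ↔ ∀ q, d q ∈ rightAnnihilator la ra := by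
  simp only [IsDer, mem_rightAnnihilator_iff, zero_smul, one_smul, zero_add, eq_comm (a := (0 : S)),
    forall_and]
  exact and_congr forall_comm forall_comm

/-- The `(0,0,1)`-derivations are the linear maps into the right annihilator, by restriction of
the codomain. -/
def derSubZeroZeroOneEquiv :
    DerSub la ra 0 0 1 ≃ₗ[K] S →ₗ[K] rightAnnihilator la ra where
  toFun d := d.1.codRestrict _ ((isDer_zero_zero_one_iff la ra).1 d.2)
  invFun f := ⟨(rightAnnihilator la ra).subtype ∘ₗ f,
    (isDer_zero_zero_one_iff la ra).2 fun q => (f q).2⟩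
  map_add' _ _ := rfl
  map_smul' _ _ := rfl

theorem finrank_derSub_zero_zero_one [Nontrivial K] [Module.Free K S] [Module.Finite K S]
    [Module.Free K (rightAnnihilator la ra)] [Module.Finite K (rightAnnihilator la ra)] :
    Module.finrank K (DerSub la ra 0 0 1) =
      Module.finrank K S * Module.finrank K (rightAnnihilator la ra) := by
  rw [(derSubZeroZeroOneEquiv la ra).finrank_eq, Module.finrank_linearMap]

end RightAnnihilator

section ProdCodomain

variable {R M N : Type*} [Semiring R] [AddCommMonoid M] [Module R M] [AddCommMonoid N]
  [Module R N]

theorem forall_snd_apply_eq_zero_iff (d : R × R →ₗ[R] M × N) :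
    (∀ q, (d q).2 = 0) ↔ ∃ m₁ m₂ : M, d (1, 0) = (m₁, 0) ∧ d (0, 1) = (m₂, 0) := by
  constructor
  · intro h
    exact ⟨(d (1, 0)).1, (d (0, 1)).1, Prod.ext rfl (h _), Prod.ext rfl (h _)⟩
  · rintro ⟨m₁, m₂, h₁, h₂⟩
    have snd_comp_eq_zero : LinearMap.snd R M N ∘ₗ d = 0 := by
      ext <;> simp [h₁, h₂]
    exact LinearMap.congr_fun snd_comp_eq_zero

end ProdCodomain

theorem rightAnnihilator_L3_eq_ker_snd (b : ℂ) :
    rightAnnihilator (L3l b) (L3r b) = LinearMap.ker (LinearMap.snd ℂ ℂ ℂ) := by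
  ext s
  rw [mem_rightAnnihilator_iff, LinearMap.mem_ker, LinearMap.snd_apply]
  constructor
  · rintro ⟨hl, -⟩
    simpa [L3l] using congrArg Prod.snd (hl (0, 1))
  · intro hs
    simp [L3l, L3r, hs]

theorem finrank_rightAnnihilator_L3 (b : ℂ) :
    Module.finrank ℂ (rightAnnihilator (L3l b) (L3r b)) = 1 := by
  rw [rightAnnihilator_L3_eq_ker_snd, LinearMap.ker_snd,
    LinearMap.finrank_range_of_inj LinearMap.inl_injective, Module.finrank_self]

theorem L3_der_zero_zero_one (b : ℂ) :
    (∀ d : (ℂ × ℂ) →ₗ[ℂ] (ℂ × ℂ), IsDer (L3l b) (L3r b) 0 0 1 d ↔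
      ∃ d₁₁ d₁₂ : ℂ, d ((1 : ℂ), (0 : ℂ)) = (d₁₁, 0) ∧ d ((0 : ℂ), (1 : ℂ)) = (d₁₂, 0)) ∧
    Module.finrank ℂ (DerSub (L3l b) (L3r b) 0 0 1) = 2 := by
  constructor
  · intro d
    rw [isDer_zero_zero_one_iff, rightAnnihilator_L3_eq_ker_snd]
    exact forall_snd_apply_eq_zero_iff d
  · rw [finrank_derSub_zero_zero_one, finrank_rightAnnihilator_L3, Module.finrank_prod,
      Module.finrank_self]
end
end

section
/- Let c ∈ ℂ and let L⁴₂(c) be the left-symmetric dialgebra on ℂ² with basis e₁, e₂ and products e₂ ⊣ e₂ = c·e₁ + e₂, e₂ ⊢ e₁ = e₁, e₂ ⊢ e₂ = e₂ (all other basis products zero). Then a linear map d : ℂ² → ℂ² is a (1,1,1)-derivation of L⁴₂(c) if and only if its matrix in the basis (e₁,e₂) has the form [[t, −c·t],[0, 0]] for some t ∈ ℂ; in particular Der_{(1,1,1)}L⁴₂(c) has dimension 1. -/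
noncomputable section

/-- The left product `⊣` of the dialgebra, extended bilinearly from its values on the
basis `e₁ = (1,0)`, `e₂ = (0,1)` of `ℂ²`. -/
def L4l (c : ℂ) : (ℂ × ℂ) →ₗ[ℂ] (ℂ × ℂ) →ₗ[ℂ] (ℂ × ℂ) :=
  LinearMap.mk₂ ℂ (fun p q => (c * p.2 * q.2, p.2 * q.2))
    (by intros; ext <;> simp <;> ring)
    (by intros; ext <;> simp <;> ring)
    (by intros; ext <;> simp <;> ring)
    (by intros; ext <;> simp <;> ring)

/-- The right product `⊢` of the dialgebra, extended bilinearly from its values on the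
basis `e₁ = (1,0)`, `e₂ = (0,1)` of `ℂ²`. -/
def L4r (c : ℂ) : (ℂ × ℂ) →ₗ[ℂ] (ℂ × ℂ) →ₗ[ℂ] (ℂ × ℂ) :=
  LinearMap.mk₂ ℂ (fun p q => (p.2 * q.1, p.2 * q.2))
    (by intros; ext <;> simp <;> ring)
    (by intros; ext <;> simp <;> ring)
    (by intros; ext <;> simp <;> ring)
    (by intros; ext <;> simp <;> ring)

/-!
Both products are governed by the functional `φ = snd` and the vector `u = (c, 1)`, which satisfies
`φ u = 1`: one has `p ⊣ q = φ p • φ q • u` and `p ⊢ q = φ p • q`. For any such pair `(φ, u)` on any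
module, the law for `⊢` at `q = u` gives `φ ∘ d = 0`, and then the law for `⊣` at `p = q = u` gives
`d u = 0`; conversely these two conditions make `d` a derivation. So derivations are the same as
endomorphisms of `ker φ`, extended by zero along `u`.
-/

variable {K S : Type*}

section CommRing

variable [CommRing K] [AddCommGroup S] [Module K S] {φ : Module.Dual K S} {u : S}

theorem isDer_smulRight_iff (hu : φ u = 1) (d : S →ₗ[K] S) :
    IsDer (φ.smulRight (φ.smulRight u)) (φ.smulRight LinearMap.id) 1 1 1 d ↔
      φ ∘ₗ d = 0 ∧ d u = 0 := by
  simp only [IsDer, LinearMap.smulRight_apply, LinearMap.smul_apply, LinearMap.id_apply,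
    map_smul, one_smul]
  constructor
  · rintro ⟨hleft, hright⟩
    have hφd : ∀ p, φ (d p) = 0 := fun p => by
      have hpu : φ (d p) • u = 0 := right_eq_add.mp (hright p u)
      simpa [hu] using congrArg φ hpu
    exact ⟨LinearMap.ext hφd, by simpa [hu, hφd] using hleft u u⟩
  · rintro ⟨hφd, hdu⟩
    have hφd_apply : ∀ p, φ (d p) = 0 := LinearMap.congr_fun hφd
    simp [hφd_apply, hdu]

/-- The projection `p ↦ p - φ p • u` of `S` onto `ker φ` along `u`, where `φ u = 1`. -/
def kerProjection (hu : φ u = 1) : S →ₗ[K] LinearMap.ker φ :=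
  (LinearMap.id - φ.smulRight u).codRestrict (LinearMap.ker φ) fun p => by simp [hu]

theorem coe_kerProjection_apply (hu : φ u = 1) (p : S) :
    (kerProjection hu p : S) = p - φ p • u :=
  rfl

theorem kerProjection_self (hu : φ u = 1) : kerProjection hu u = 0 :=
  Subtype.ext <| by simp [coe_kerProjection_apply, hu]

theorem kerProjection_coe (hu : φ u = 1) (x : LinearMap.ker φ) : kerProjection hu x = x :=
  Subtype.ext <| by simp [coe_kerProjection_apply]

/-- The derivations of the dialgebra `p ⊣ q = φ p • φ q • u`, `p ⊢ q = φ p • q` are identified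
with the endomorphisms of `ker φ`: a derivation is restricted to `ker φ`, and an endomorphism is
extended by zero along `u`. -/
def derSubEquivEndKer (hu : φ u = 1) :
    DerSub (φ.smulRight (φ.smulRight u)) (φ.smulRight LinearMap.id) 1 1 1 ≃ₗ[K]
      Module.End K (LinearMap.ker φ) where
  toFun d := d.1.restrict fun p _ =>
    LinearMap.congr_fun ((isDer_smulRight_iff hu d.1).mp d.2).1 p
  map_add' _ _ := rfl
  map_smul' _ _ := rfl
  invFun f := ⟨(LinearMap.ker φ).subtype ∘ₗ f ∘ₗ kerProjection hu,
    (isDer_smulRight_iff hu _).mpr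
      ⟨LinearMap.ext fun p => (f (kerProjection hu p)).2, by simp [kerProjection_self]⟩⟩
  left_inv d := by
    have hdu : d.1 u = 0 := ((isDer_smulRight_iff hu d.1).mp d.2).2
    have hproj (p : S) : d.1 (kerProjection hu p) = d.1 p := by
      simp [coe_kerProjection_apply, hdu]
    exact Subtype.ext (LinearMap.ext hproj)
  right_inv f := LinearMap.ext fun x => congrArg f (kerProjection_coe hu x)

theorem snd_comp_eq_zero_and_apply_eq_zero_iff (c : K) (d : K × K →ₗ[K] K × K) :
    LinearMap.snd K K K ∘ₗ d = 0 ∧ d (c, 1) = 0 ↔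
      ∃ t : K, d (1, 0) = (t, 0) ∧ d (0, 1) = (-c * t, 0) := by
  have hdc : d (c, 1) = c • d (1, 0) + d (0, 1) := by
    rw [← map_smul, ← map_add]
    simp
  constructor
  · rintro ⟨hsnd, hzero⟩
    have hd₁ : d (1, 0) = ((d (1, 0)).1, 0) := Prod.ext rfl (LinearMap.congr_fun hsnd (1, 0))
    have hd₂ : d (0, 1) = -(c • d (1, 0)) := eq_neg_of_add_eq_zero_right (hdc ▸ hzero)
    refine ⟨(d (1, 0)).1, hd₁, ?_⟩
    rw [hd₂, hd₁]
    simp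
  · rintro ⟨t, hd₁, hd₂⟩
    exact ⟨by ext <;> simp [hd₁, hd₂], by simp [hdc, hd₁, hd₂]⟩

end CommRing

theorem finrank_derSub_smulRight [Field K] [AddCommGroup S] [Module K S]
    [FiniteDimensional K S] {φ : Module.Dual K S} {u : S} (hu : φ u = 1) :
    Module.finrank K (DerSub (φ.smulRight (φ.smulRight u)) (φ.smulRight LinearMap.id) 1 1 1) =
      (Module.finrank K S - 1) ^ 2 := by
  have hφ : φ ≠ 0 := by
    rintro rfl
    simp at hu
  have hker : Module.finrank K (LinearMap.ker φ) = Module.finrank K S - 1 :=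
    Nat.eq_sub_of_add_eq (Module.Dual.finrank_ker_add_one_of_ne_zero hφ)
  rw [(derSubEquivEndKer hu).finrank_eq, Module.finrank_linearMap, hker, sq]

theorem L4l_eq_smulRight (c : ℂ) :
    L4l c = (LinearMap.snd ℂ ℂ ℂ).smulRight ((LinearMap.snd ℂ ℂ ℂ).smulRight (c, 1)) := by
  ext <;> simp [L4l]

theorem L4r_eq_smulRight (c : ℂ) :
    L4r c = (LinearMap.snd ℂ ℂ ℂ).smulRight LinearMap.id := by
  ext <;> simp [L4r]

theorem L4_der_one_one_one (c : ℂ) :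
    (∀ d : (ℂ × ℂ) →ₗ[ℂ] (ℂ × ℂ), IsDer (L4l c) (L4r c) 1 1 1 d ↔
      ∃ t : ℂ, d ((1 : ℂ), (0 : ℂ)) = (t, 0) ∧ d ((0 : ℂ), (1 : ℂ)) = (-c * t, 0)) ∧
    Module.finrank ℂ (DerSub (L4l c) (L4r c) 1 1 1) = 1 := by
  have hu : LinearMap.snd ℂ ℂ ℂ (c, 1) = 1 := rfl
  rw [L4l_eq_smulRight, L4r_eq_smulRight]
  refine ⟨fun d => ?_, ?_⟩
  · rw [isDer_smulRight_iff hu, snd_comp_eq_zero_and_apply_eq_zero_iff]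
  · rw [finrank_derSub_smulRight hu]
    simp
end
end

section
/- Let a, c ∈ ℂ with a ≠ 1, and let L⁵₂(a,c) be the left-symmetric dialgebra on ℂ² with basis e₁, e₂ and products e₂ ⊣ e₂ = c·e₁ + e₂, e₂ ⊢ e₁ = a·e₁, e₂ ⊢ e₂ = c·(1−a)·e₁ + e₂ (all other basis products zero). Then a linear map d : ℂ² → ℂ² is a (0,1,0)-derivation of L⁵₂(a,c) if and only if its matrix in the basis (e₁,e₂) has the form [[d₁₁, d₁₂],[0, 0]] for some d₁₁, d₁₂ ∈ ℂ; in particular Der_{(0,1,0)}L⁵₂(a,c) has dimension 2. -/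
noncomputable section

/-- The left product `⊣` of the dialgebra, extended bilinearly from its values on the
basis `e₁ = (1,0)`, `e₂ = (0,1)` of `ℂ²`. -/
def L5l (a c : ℂ) : (ℂ × ℂ) →ₗ[ℂ] (ℂ × ℂ) →ₗ[ℂ] (ℂ × ℂ) :=
  LinearMap.mk₂ ℂ (fun p q => (c * p.2 * q.2, p.2 * q.2))
    (by intros; ext <;> simp <;> ring)
    (by intros; ext <;> simp <;> ring)
    (by intros; ext <;> simp <;> ring)
    (by intros; ext <;> simp <;> ring)

/-- The right product `⊢` of the dialgebra, extended bilinearly from its values on the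
basis `e₁ = (1,0)`, `e₂ = (0,1)` of `ℂ²`. -/
def L5r (a c : ℂ) : (ℂ × ℂ) →ₗ[ℂ] (ℂ × ℂ) →ₗ[ℂ] (ℂ × ℂ) :=
  LinearMap.mk₂ ℂ (fun p q => (a * p.2 * q.1 + c * (1 - a) * p.2 * q.2, p.2 * q.2))
    (by intros; ext <;> simp <;> ring)
    (by intros; ext <;> simp <;> ring)
    (by intros; ext <;> simp <;> ring)
    (by intros; ext <;> simp <;> ring)

/-!
The defining identities of a `(0,1,0)`-derivation read `d p ⊣ q = 0` and `d p ⊢ q = 0`, so these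
derivations are exactly the linear maps into the common left annihilator `A` of the two products,
and they form a copy of `Hom(S, A)`. For `L⁵₂(a,c)` both products vanish as soon as the
`e₂`-coordinate of the left factor does, and `p ⊣ e₂` recovers that coordinate, so `A = ℂ e₁`.
-/

section Annihilator

variable {K S : Type*} [CommRing K] [AddCommGroup S] [Module K S] (la ra : S →ₗ[K] S →ₗ[K] S)

/-- The common left annihilator of the two products: the elements `p` with `p ⊣ q = 0` and
`p ⊢ q = 0` for all `q`. It is the submodule in which `(0,1,0)`-derivations take their values. -/
def leftAnnihilator : Submodule K S :=
  LinearMap.ker la ⊓ LinearMap.ker ra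

theorem isDer_zero_one_zero_iff_range_le_leftAnnihilator {d : S →ₗ[K] S} :
    IsDer la ra 0 1 0 d ↔ LinearMap.range d ≤ leftAnnihilator la ra := by
  simp only [IsDer, leftAnnihilator, zero_smul, one_smul, add_zero, le_inf_iff,
    LinearMap.range_le_ker_iff, LinearMap.ext_iff, LinearMap.comp_apply, LinearMap.zero_apply,
    eq_comm]

theorem derSub_zero_one_zero_eq_range_compRight :
    DerSub la ra 0 1 0 =
      LinearMap.range ((leftAnnihilator la ra).subtype.compRight K (M := S)) := by
  ext d
  refine (isDer_zero_one_zero_iff_range_le_leftAnnihilator la ra).trans ⟨fun h => ?_, ?_⟩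
  · exact ⟨d.codRestrict _ fun p => h ⟨p, rfl⟩, LinearMap.subtype_comp_codRestrict ..⟩
  · rintro ⟨f, rfl⟩ _ ⟨p, rfl⟩
    exact (f p).2

theorem finrank_derSub_zero_one_zero [StrongRankCondition K] [Module.Free K S] [Module.Finite K S]
    [Module.Free K (leftAnnihilator la ra)] [Module.Finite K (leftAnnihilator la ra)] :
    Module.finrank K (DerSub la ra 0 1 0) =
      Module.finrank K S * Module.finrank K (leftAnnihilator la ra) := by
  have compRight_injective :
      Function.Injective ((leftAnnihilator la ra).subtype.compRight K (M := S)) :=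
    fun _ _ h => (LinearMap.cancel_left (leftAnnihilator la ra).injective_subtype).1 h
  rw [derSub_zero_one_zero_eq_range_compRight,
    LinearMap.finrank_range_of_inj compRight_injective, Module.finrank_linearMap]

end Annihilator

theorem range_le_range_inl_iff_exists {R M N : Type*} [Semiring R] [AddCommMonoid M]
    [AddCommMonoid N] [Module R M] [Module R N] {d : R × R →ₗ[R] M × N} :
    LinearMap.range d ≤ LinearMap.range (LinearMap.inl R M N) ↔
      ∃ d₁₁ d₁₂ : M, d (1, 0) = (d₁₁, 0) ∧ d (0, 1) = (d₁₂, 0) := by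
  have snd_comp_eq_zero_iff :
      LinearMap.snd R M N ∘ₗ d = 0 ↔ (d (1, 0)).2 = 0 ∧ (d (0, 1)).2 = 0 := by
    simp [LinearMap.prod_ext_iff, LinearMap.ext_ring_iff]
  rw [LinearMap.range_inl, LinearMap.range_le_ker_iff, snd_comp_eq_zero_iff]
  simp [Prod.ext_iff]

theorem leftAnnihilator_L5 (a c : ℂ) :
    leftAnnihilator (L5l a c) (L5r a c) = LinearMap.range (LinearMap.inl ℂ ℂ ℂ) := by
  rw [LinearMap.range_inl]
  ext p
  simp only [leftAnnihilator, Submodule.mem_inf, LinearMap.mem_ker, LinearMap.snd_apply]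
  refine ⟨fun ⟨hl, _⟩ => ?_, fun hp => ⟨?_, ?_⟩⟩
  · simpa [L5l] using congrArg Prod.snd (LinearMap.congr_fun hl (0, 1))
  · ext <;> simp [L5l, hp]
  · ext <;> simp [L5r, hp]

theorem finrank_leftAnnihilator_L5 (a c : ℂ) :
    Module.finrank ℂ (leftAnnihilator (L5l a c) (L5r a c)) = 1 := by
  rw [leftAnnihilator_L5, LinearMap.finrank_range_of_inj LinearMap.inl_injective,
    Module.finrank_self]

theorem L5_der_zero_one_zero (a c : ℂ) (ha : a ≠ 1) :
    (∀ d : (ℂ × ℂ) →ₗ[ℂ] (ℂ × ℂ), IsDer (L5l a c) (L5r a c) 0 1 0 d ↔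
      ∃ d₁₁ d₁₂ : ℂ, d ((1 : ℂ), (0 : ℂ)) = (d₁₁, 0) ∧ d ((0 : ℂ), (1 : ℂ)) = (d₁₂, 0)) ∧
    Module.finrank ℂ (DerSub (L5l a c) (L5r a c) 0 1 0) = 2 := by
  refine ⟨fun d => ?_, ?_⟩
  · rw [isDer_zero_one_zero_iff_range_le_leftAnnihilator, leftAnnihilator_L5,
      range_le_range_inl_iff_exists]
  · rw [finrank_derSub_zero_one_zero, finrank_leftAnnihilator_L5, Module.finrank_prod,
      Module.finrank_self]
end
end

section
/- Let a ∈ ℂ with a ≠ 0, and let L⁶₂(a) be the left-symmetric dialgebra on ℂ² with basis e₁, e₂ and products e₂ ⊣ e₂ = e₂, e₂ ⊢ e₁ = a·e₁, e₂ ⊢ e₂ = e₂ (all other basis products zero). Then a linear map d : ℂ² → ℂ² is a (1,0,1)-derivation of L⁶₂(a) if and only if its matrix in the basis (e₁,e₂) is diagonal, i.e., of the form [[d₁₁, 0],[0, d₂₂]] for some d₁₁, d₂₂ ∈ ℂ; in particular Der_{(1,0,1)}L⁶₂(a) has dimension 2. -/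
noncomputable section

/-- The left product `⊣` of the dialgebra, extended bilinearly from its values on the
basis `e₁ = (1,0)`, `e₂ = (0,1)` of `ℂ²`. -/
def L6l (a : ℂ) : (ℂ × ℂ) →ₗ[ℂ] (ℂ × ℂ) →ₗ[ℂ] (ℂ × ℂ) :=
  LinearMap.mk₂ ℂ (fun p q => ((0 : ℂ), p.2 * q.2))
    (by intros; ext <;> simp <;> ring)
    (by intros; ext <;> simp <;> ring)
    (by intros; ext <;> simp <;> ring)
    (by intros; ext <;> simp <;> ring)

/-- The right product `⊢` of the dialgebra, extended bilinearly from its values on the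
basis `e₁ = (1,0)`, `e₂ = (0,1)` of `ℂ²`. -/
def L6r (a : ℂ) : (ℂ × ℂ) →ₗ[ℂ] (ℂ × ℂ) →ₗ[ℂ] (ℂ × ℂ) :=
  LinearMap.mk₂ ℂ (fun p q => (a * p.2 * q.1, p.2 * q.2))
    (by intros; ext <;> simp <;> ring)
    (by intros; ext <;> simp <;> ring)
    (by intros; ext <;> simp <;> ring)
    (by intros; ext <;> simp <;> ring)

/-! A `(1,0,1)`-derivation is an endomorphism commuting with every left multiplication. In `L⁶₂(a)`
the left multiplications by `p` are `p.2 • P` for `⊣` and `p.2 • (P + a • (1 - P))` for `⊢`, where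
`P` is the projection onto the line of `e₂` along the line of `e₁`. So the derivations form the
centralizer of `P`, which consists of the endomorphisms preserving both lines. -/

theorem isDer_one_zero_one_iff_commute {R S : Type*} [CommRing R] [AddCommGroup S] [Module R S]
    (la ra : S →ₗ[R] S →ₗ[R] S) (d : Module.End R S) :
    IsDer la ra 1 0 1 d ↔ (∀ p, Commute d (la p)) ∧ ∀ p, Commute d (ra p) := by
  simp only [IsDer, one_smul, zero_smul, zero_add, commute_iff_eq, LinearMap.ext_iff,
    Module.End.mul_apply]

section ProdMap

variable {R M N M' N' : Type*} [CommSemiring R] [AddCommMonoid M] [AddCommMonoid N]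
  [AddCommMonoid M'] [AddCommMonoid N'] [Module R M] [Module R N] [Module R M'] [Module R N']

theorem prodMapLinear_injective :
    Function.Injective (LinearMap.prodMapLinear R M N M' N' R) := by
  rintro ⟨f₁, g₁⟩ ⟨f₂, g₂⟩ h
  have apply_eq (m : M) (n : N) : (f₁ m, g₁ n) = (f₂ m, g₂ n) := LinearMap.congr_fun h (m, n)
  ext x
  · exact congrArg Prod.fst (apply_eq x 0)
  · exact congrArg Prod.snd (apply_eq 0 x)

theorem mem_range_prodMapLinear_iff {d : M × N →ₗ[R] M' × N'} :
    d ∈ (LinearMap.prodMapLinear R M N M' N' R).range ↔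
      (∀ m, (d (m, 0)).2 = 0) ∧ ∀ n, (d (0, n)).1 = 0 := by
  constructor
  · rintro ⟨⟨f, g⟩, rfl⟩
    simp
  · rintro ⟨snd_eq_zero, fst_eq_zero⟩
    refine ⟨(.fst R M' N' ∘ₗ d ∘ₗ .inl R M N, .snd R M' N' ∘ₗ d ∘ₗ .inr R M N), ?_⟩
    ext <;> simp [snd_eq_zero, fst_eq_zero]

theorem commute_prodMap_zero_one_iff {d : Module.End R (M × N)} :
    Commute d (LinearMap.prodMap 0 1) ↔ d ∈ (LinearMap.prodMapLinear R M N M N R).range := by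
  constructor
  · intro h
    have apply_snd (p : M × N) : d (0, p.2) = (0, (d p).2) := LinearMap.congr_fun h p
    refine mem_range_prodMapLinear_iff.2 ⟨fun m ↦ ?_, fun n ↦ ?_⟩
    · calc
        (d (m, 0)).2 = (d 0).2 := (congrArg Prod.snd (apply_snd (m, 0))).symm
        _ = 0 := by rw [map_zero, Prod.snd_zero]
    · exact congrArg Prod.fst (apply_snd (0, n))
  · rintro ⟨⟨f, g⟩, rfl⟩
    ext <;> simp

theorem mem_range_prodMapLinear_iff_exists_diagonal {d : Module.End R (R × R)} :
    d ∈ (LinearMap.prodMapLinear R R R R R R).range ↔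
      ∃ x y : R, d (1, 0) = (x, 0) ∧ d (0, 1) = (0, y) := by
  constructor
  · rintro ⟨⟨f, g⟩, rfl⟩
    exact ⟨f 1, g 1, by simp, by simp⟩
  · rintro ⟨x, y, h₁, h₂⟩
    refine ⟨(x • LinearMap.id, y • LinearMap.id), ?_⟩
    ext <;> simp [h₁, h₂]

end ProdMap

theorem prodMap_smul_one_one_eq {R M N : Type*} [CommRing R] [AddCommGroup M] [AddCommGroup N]
    [Module R M] [Module R N] (a : R) :
    (LinearMap.prodMap (a • 1) 1 : Module.End R (M × N)) =
      LinearMap.prodMap 0 1 + a • (1 - LinearMap.prodMap 0 1) := by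
  ext <;> simp

section L6

variable (a : ℂ)

theorem L6l_eq_smul_prodMap (p : ℂ × ℂ) :
    L6l a p = p.2 • (LinearMap.prodMap 0 1 : Module.End ℂ (ℂ × ℂ)) := by
  ext <;> simp [L6l]

theorem L6r_eq_smul_prodMap (p : ℂ × ℂ) :
    L6r a p = p.2 • (LinearMap.prodMap (a • 1) 1 : Module.End ℂ (ℂ × ℂ)) := by
  ext <;> simp [L6r, mul_comm]

theorem isDer_L6_one_zero_one_iff_commute (d : Module.End ℂ (ℂ × ℂ)) :
    IsDer (L6l a) (L6r a) 1 0 1 d ↔ Commute d (LinearMap.prodMap 0 1) := by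
  rw [isDer_one_zero_one_iff_commute]
  constructor
  · rintro ⟨hl, -⟩
    simpa only [L6l_eq_smul_prodMap, one_smul] using hl (0, 1)
  · intro h
    have hr : Commute d (LinearMap.prodMap (a • 1) 1) := by
      rw [prodMap_smul_one_one_eq]
      exact h.add_right (((Commute.one_right d).sub_right h).smul_right a)
    refine ⟨fun p ↦ ?_, fun p ↦ ?_⟩
    · rw [L6l_eq_smul_prodMap]
      exact h.smul_right p.2
    · rw [L6r_eq_smul_prodMap]
      exact hr.smul_right p.2

theorem derSub_L6_one_zero_one_eq_range :
    DerSub (L6l a) (L6r a) 1 0 1 = (LinearMap.prodMapLinear ℂ ℂ ℂ ℂ ℂ ℂ).range :=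
  Submodule.ext fun d ↦
    (isDer_L6_one_zero_one_iff_commute a d).trans commute_prodMap_zero_one_iff

end L6

theorem L6_der_one_zero_one (a : ℂ) (ha : a ≠ 0) :
    (∀ d : (ℂ × ℂ) →ₗ[ℂ] (ℂ × ℂ), IsDer (L6l a) (L6r a) 1 0 1 d ↔
      ∃ d₁₁ d₂₂ : ℂ, d ((1 : ℂ), (0 : ℂ)) = (d₁₁, 0) ∧ d ((0 : ℂ), (1 : ℂ)) = (0, d₂₂)) ∧
    Module.finrank ℂ (DerSub (L6l a) (L6r a) 1 0 1) = 2 := by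
  refine ⟨fun d ↦ ?_, ?_⟩
  · rw [isDer_L6_one_zero_one_iff_commute, commute_prodMap_zero_one_iff,
      mem_range_prodMapLinear_iff_exists_diagonal]
  · rw [derSub_L6_one_zero_one_eq_range, LinearMap.finrank_range_of_inj prodMapLinear_injective]
    simp
end
end
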